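/- arXiv:2101.10128 — 2 statements merged into one kernel-verified Lean document; each statement's English description precedes it below -/
import Mathlib

section
/- Under the decoy-state assumptions, the following identity holds: ν₁·Q(ν₂)·e^{ν₂} − ν₂·Q(ν₁)·e^{ν₁} = (ν₁ − ν₂)·Y(0) − ν₁ν₂·Σ_{i=2}^∞ (ν₁^{i−1} − ν₂^{i−1})·Y(i)/i!. -/
/-- The gain for intensity `m` with yields `Y`: Poisson average of the yields. -/
noncomputable def decoyGain (Y : ℕ → ℝ) (m : ℝ) : ℝ :=
  ∑' i : ℕ, Real.exp (-m) * m ^ i / (Nat.factorial i) * Y i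

/-!
Multiplying the gain `Q(m)` by `e^m` removes the Poisson normalisation and leaves the power series
`f(m) = ∑ m ^ i * (Y i / i!)`. In `ν₁ * f(ν₂) - ν₂ * f(ν₁)` the linear terms cancel, and every later
term has the factor `ν₁ * ν₂`.
-/

open scoped Nat

theorem tsum_pow_mul_eq_add_add_tsum {R : Type*} [Ring R] [TopologicalSpace R]
    [IsTopologicalAddGroup R] [T2Space R] {a : ℕ → R} {x : R}
    (hx : Summable fun i ↦ x ^ i * a i) :
    ∑' i, x ^ i * a i = a 0 + x * a 1 + ∑' i, x ^ (i + 2) * a (i + 2) := by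
  simpa [Finset.sum_range_succ] using (hx.sum_add_tsum_nat_add 2).symm

section Field

variable {K : Type*} [Field K] [TopologicalSpace K] [IsTopologicalRing K] [T2Space K]
  {a : ℕ → K} {x y : K}

theorem mul_mul_tsum_pow_sub_pow_mul (hx : Summable fun i ↦ x ^ (i + 2) * a i)
    (hy : Summable fun i ↦ y ^ (i + 2) * a i) :
    x * y * ∑' i, (x ^ (i + 1) - y ^ (i + 1)) * a i =
      y * ∑' i, x ^ (i + 2) * a i - x * ∑' i, y ^ (i + 2) * a i := by
  calc x * y * ∑' i, (x ^ (i + 1) - y ^ (i + 1)) * a i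
      = ∑' i, (y * (x ^ (i + 2) * a i) - x * (y ^ (i + 2) * a i)) := by
        rw [← tsum_mul_left]
        exact tsum_congr fun i ↦ by ring
    _ = y * ∑' i, x ^ (i + 2) * a i - x * ∑' i, y ^ (i + 2) * a i := by
        rw [(hx.mul_left y).tsum_sub (hy.mul_left x), tsum_mul_left, tsum_mul_left]

theorem mul_tsum_pow_mul_sub_mul_tsum_pow_mul (hx : Summable fun i ↦ x ^ i * a i)
    (hy : Summable fun i ↦ y ^ i * a i) :
    x * ∑' i, y ^ i * a i - y * ∑' i, x ^ i * a i =
      (x - y) * a 0 - x * y * ∑' i, (x ^ (i + 1) - y ^ (i + 1)) * a (i + 2) := by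
  have hx_tail : Summable fun i ↦ x ^ (i + 2) * a (i + 2) := (summable_nat_add_iff 2).2 hx
  have hy_tail : Summable fun i ↦ y ^ (i + 2) * a (i + 2) := (summable_nat_add_iff 2).2 hy
  rw [tsum_pow_mul_eq_add_add_tsum hx, tsum_pow_mul_eq_add_add_tsum hy,
    mul_mul_tsum_pow_sub_pow_mul hx_tail hy_tail]
  ring

end Field

theorem summable_pow_mul_div_factorial_of_norm_le {𝕜 : Type*} [RCLike 𝕜] {a : ℕ → 𝕜} {C : ℝ}
    (ha : ∀ i, ‖a i‖ ≤ C) (x : 𝕜) : Summable fun i ↦ x ^ i * (a i / i !) := by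
  refine .of_norm_bounded ((Real.summable_pow_div_factorial ‖x‖).mul_right C) fun i ↦ ?_
  calc ‖x ^ i * (a i / i !)‖ = ‖x‖ ^ i / i ! * ‖a i‖ := by
        rw [norm_mul, norm_pow, norm_div, RCLike.norm_natCast]
        ring
    _ ≤ ‖x‖ ^ i / i ! * C := by gcongr; exact ha i

theorem decoyGain_mul_exp (Y : ℕ → ℝ) (m : ℝ) :
    decoyGain Y m * Real.exp m = ∑' i, m ^ i * (Y i / i !) := by
  have factor : decoyGain Y m = Real.exp (-m) * ∑' i, m ^ i * (Y i / i !) := by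
    rw [decoyGain, ← tsum_mul_left]
    exact tsum_congr fun i ↦ by ring
  rw [factor, mul_right_comm, ← Real.exp_add, neg_add_cancel, Real.exp_zero, one_mul]

theorem decoy_vacuum_identity_general {Y : ℕ → ℝ} {ν₁ ν₂ : ℝ}
    (h₁ : Summable fun i ↦ ν₁ ^ i * (Y i / i !)) (h₂ : Summable fun i ↦ ν₂ ^ i * (Y i / i !)) :
    ν₁ * decoyGain Y ν₂ * Real.exp ν₂ - ν₂ * decoyGain Y ν₁ * Real.exp ν₁ =
      (ν₁ - ν₂) * Y 0 -
        ν₁ * ν₂ * ∑' i, (ν₁ ^ (i + 1) - ν₂ ^ (i + 1)) * Y (i + 2) / (i + 2)! := by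
  simpa only [mul_assoc, decoyGain_mul_exp, Nat.factorial_zero, Nat.cast_one, div_one,
    mul_div_assoc] using mul_tsum_pow_mul_sub_mul_tsum_pow_mul h₁ h₂

theorem decoy_vacuum_identity (Y : ℕ → ℝ) (hY : ∀ i, 0 ≤ Y i ∧ Y i ≤ 1)
    (μ ν₁ ν₂ : ℝ) (hν₂ : 0 ≤ ν₂) (hν : ν₂ < ν₁) (hμ : ν₁ + ν₂ < μ) :
    ν₁ * decoyGain Y ν₂ * Real.exp ν₂ - ν₂ * decoyGain Y ν₁ * Real.exp ν₁
      = (ν₁ - ν₂) * Y 0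
        - ν₁ * ν₂ *
          ∑' i : ℕ, (ν₁ ^ (i + 1) - ν₂ ^ (i + 1)) * Y (i + 2) / (Nat.factorial (i + 2)) := by
  have summable_at := summable_pow_mul_div_factorial_of_norm_le fun i ↦
    (Real.norm_of_nonneg (hY i).1).trans_le (hY i).2
  exact decoy_vacuum_identity_general (summable_at ν₁) (summable_at ν₂)
end

section
/- Let μ, t be reals with 0 < μ ≤ 1 and 0 < t ≤ 1, and let p_d ≥ 0. Define Q^μ = p_d + 1 − e^{-μt} and Q₁^μ = μ·e^{-μ}·(p_d + t). Then Q₁^μ / Q^μ < e^{-(1−t)μ}. -/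
/-! After cancelling `exp (-μ)` and clearing the denominator, the claim reads
`μ * p_d + μ * t < exp (μ * t) * p_d + (exp (μ * t) - 1)`. The dark-count terms compare because
`μ ≤ 1 ≤ exp (μ * t)`, the others because `exp` lies strictly above its tangent line at `0`. -/

/-- The total gain `Q^μ`: the probability that a signal of intensity `μ`, sent through an optical
system of transmittance `t`, is detected with dark-count probability `p_d`. As usual, the product
of the dark-count and photon-click probabilities is neglected. -/
noncomputable def totalGain (μ t p_d : ℝ) : ℝ := p_d + 1 - Real.exp (-(μ * t))

/-- The single-photon gain `Q₁^μ`: the Poisson weight `μ * exp (-μ)` of single-photon pulses times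
their detection probability `p_d + t`. -/
noncomputable def singlePhotonGain (μ t p_d : ℝ) : ℝ := μ * Real.exp (-μ) * (p_d + t)

section Gains

variable {μ t p_d : ℝ}

theorem totalGain_pos (hμt : 0 < μ * t) (hpd : 0 ≤ p_d) : 0 < totalGain μ t p_d := by
  have exp_lt_one : Real.exp (-(μ * t)) < 1 := Real.exp_lt_one_iff.2 (neg_lt_zero.2 hμt)
  unfold totalGain
  linarith

theorem exp_mul_totalGain (μ t p_d : ℝ) :
    Real.exp (μ * t) * totalGain μ t p_d = Real.exp (μ * t) * p_d + (Real.exp (μ * t) - 1) := by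
  rw [totalGain, Real.exp_neg]
  field_simp
  ring

theorem mul_add_lt_exp_mul_totalGain (hμt : μ * t ≠ 0) (hμ : μ ≤ Real.exp (μ * t))
    (hpd : 0 ≤ p_d) : μ * (p_d + t) < Real.exp (μ * t) * totalGain μ t p_d :=
  calc
    μ * (p_d + t) = μ * p_d + μ * t := mul_add μ p_d t
    _ < Real.exp (μ * t) * p_d + (Real.exp (μ * t) - 1) :=
      add_lt_add_of_le_of_lt (mul_le_mul_of_nonneg_right hμ hpd)
        (lt_sub_iff_add_lt.2 (Real.add_one_lt_exp hμt))
    _ = Real.exp (μ * t) * totalGain μ t p_d := (exp_mul_totalGain μ t p_d).symm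

theorem singlePhotonGain_lt_exp_mul_totalGain (hμt : μ * t ≠ 0) (hμ : μ ≤ Real.exp (μ * t))
    (hpd : 0 ≤ p_d) :
    singlePhotonGain μ t p_d < Real.exp (-(1 - t) * μ) * totalGain μ t p_d :=
  calc
    singlePhotonGain μ t p_d = Real.exp (-μ) * (μ * (p_d + t)) := by
      rw [singlePhotonGain]
      ring
    _ < Real.exp (-μ) * (Real.exp (μ * t) * totalGain μ t p_d) :=
      mul_lt_mul_of_pos_left (mul_add_lt_exp_mul_totalGain hμt hμ hpd) (Real.exp_pos _)
    _ = Real.exp (-(1 - t) * μ) * totalGain μ t p_d := by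
      rw [← mul_assoc, ← Real.exp_add]
      ring_nf

/-- As `p_d → ∞` the fraction tends to `μ * exp (-μ)`, and `μ ≤ exp (μ * t)` says that this limit
is at most the right-hand side. -/
theorem single_photon_fraction_lt_bs_general (hμt : 0 < μ * t) (hμ : μ ≤ Real.exp (μ * t))
    (hpd : 0 ≤ p_d) :
    singlePhotonGain μ t p_d / totalGain μ t p_d < Real.exp (-(1 - t) * μ) :=
  (div_lt_iff₀ (totalGain_pos hμt hpd)).2
    (singlePhotonGain_lt_exp_mul_totalGain hμt.ne' hμ hpd)

end Gains

theorem single_photon_fraction_lt_bs (μ t p_d : ℝ) (hμ0 : 0 < μ) (hμ1 : μ ≤ 1)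
    (ht0 : 0 < t) (ht1 : t ≤ 1) (hpd : 0 ≤ p_d) :
    (μ * Real.exp (-μ) * (p_d + t)) / (p_d + 1 - Real.exp (-(μ * t)))
      < Real.exp (-(1 - t) * μ) := by
  have hμt : 0 < μ * t := mul_pos hμ0 ht0
  exact single_photon_fraction_lt_bs_general hμt (hμ1.trans (Real.one_le_exp hμt.le)) hpd
end
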